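/- arXiv:2507.14113 — 2 statements merged into one kernel-verified Lean document; each statement's English description precedes it below -/
import Mathlib

section
/- Let d ∈ ℕ, let U ∈ GL_d(ℤ) be a unipotent matrix, and let μ be an ergodic U-invariant Borel probability measure on 𝕋^d = ℝ^d/ℤ^d. Then there exist c ∈ ℕ and a sequence (x_n)_{n=1}^∞ in 𝕋^d such that U^{cn} x_n = x_n for every n ∈ ℕ and the empirical measures m_{U, x_n, cn} converge to μ in the weak-* topology as n → ∞. -/
/-!
Along an orbit of `U` the argument in `ℝ/ℤ` of a character is a sequence `p` killed by an iterate of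
the forward difference operator, i.e. a polynomial sequence. By van der Corput's lemma its
exponential averages tend to `0` if `p` has a coefficient of positive degree which is not torsion,
and otherwise `p` is periodic. So the averages of characters converge along every orbit, and by
ergodicity some `x` is generic for `μ`.

Rounding a Hamel basis of `ℝ` over `ℚ` containing `1` to multiples of `1/n` gives endomorphisms `ψₙ`
of `ℝ/ℤ` which fix the torsion, converge pointwise to the identity, and send `a` to a point of order
dividing `D n` with `D` depending only on `a`. The map `ψₙ` applied to each coordinate commutes with
`U`, so `xₙ = ψₙ x` is periodic with a period proportional to `n`. A coefficient of `p` which is not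
torsion stays away from `0` under `ψₙ`, while torsion is unchanged, so the averages along the orbits
of `xₙ` and of `x` have the same limits.
-/

open MeasureTheory Topology Filter

/-- The `d`-dimensional torus `ℝ^d/ℤ^d`. -/
abbrev Torus (d : ℕ) := Fin d → AddCircle (1 : ℝ)

/-- The automorphism of the torus induced by an integer matrix. -/
noncomputable def toralAuto {d : ℕ} (U : Matrix (Fin d) (Fin d) ℤ) : Torus d → Torus d :=
  fun x i => ∑ j, U i j • x j

open scoped BigOperators ComplexConjugate

section Averages

open Finset

variable {𝕜 κ : Type*} [RCLike 𝕜] {l : Filter κ} {M : κ → ℕ} {u : κ → ℕ → 𝕜} {C : ℝ}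

lemma norm_expect_range_le {v : ℕ → 𝕜} (hv : ∀ i, ‖v i‖ ≤ C) (m : ℕ) :
    ‖𝔼 i ∈ range m, v i‖ ≤ C := by
  rcases (range m).eq_empty_or_nonempty with hm | hm
  · simpa [hm] using (norm_nonneg _).trans (hv 0)
  · exact (RCLike.norm_expect_le (K := 𝕜)).trans (expect_le hm fun i _ => hv i)

lemma tendsto_expect_range_succ_sub (hM : Tendsto M l atTop) (hu : ∀ n i, ‖u n i‖ ≤ C) :
    Tendsto (fun n => 𝔼 i ∈ range (M n), u n (i + 1) - 𝔼 i ∈ range (M n), u n i) l (𝓝 0) := by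
  have hbound : Tendsto (fun n => (C + C) / M n) l (𝓝 0) :=
    tendsto_const_nhds.div_atTop (tendsto_natCast_atTop_atTop.comp hM)
  refine squeeze_zero_norm (fun n => ?_) hbound
  rw [← expect_sub_distrib, expect_eq_sum_div_card, sum_range_sub, card_range, norm_div,
    RCLike.norm_natCast]
  gcongr
  exact (norm_sub_le _ _).trans (add_le_add (hu _ _) (hu _ _))

lemma tendsto_expect_range_add_sub (hM : Tendsto M l atTop) (hu : ∀ n i, ‖u n i‖ ≤ C) (h : ℕ) :
    Tendsto (fun n => 𝔼 i ∈ range (M n), u n (i + h) - 𝔼 i ∈ range (M n), u n i) l (𝓝 0) := by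
  induction h with
  | zero => simpa using tendsto_const_nhds
  | succ h ih =>
    have hsucc := tendsto_expect_range_succ_sub hM fun n i => hu n (i + h)
    simpa [add_assoc, add_comm 1 h] using hsucc.add ih

lemma tendsto_expect_range_expect_add_sub (hM : Tendsto M l atTop) (hu : ∀ n i, ‖u n i‖ ≤ C)
    {s : Finset ℕ} (hs : s.Nonempty) :
    Tendsto (fun n => 𝔼 i ∈ range (M n), 𝔼 h ∈ s, u n (i + h) - 𝔼 i ∈ range (M n), u n i)
      l (𝓝 0) := by
  have hsum := (tendsto_finsetSum s fun h _ => tendsto_expect_range_add_sub hM hu h).div_const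
    (#s : 𝕜)
  simp only [sum_const_zero, zero_div] at hsum
  refine hsum.congr fun n => ?_
  rw [← expect_eq_sum_div_card, expect_sub_distrib, expect_const hs, expect_comm]

lemma tendsto_expect_range_of_mul_shift {P : ℕ} {c : κ → 𝕜} {a : 𝕜} (hM : Tendsto M l atTop)
    (hu : ∀ n i, ‖u n i‖ ≤ C) (hshift : ∀ n i, u n (i + P) = c n * u n i)
    (hc : Tendsto c l (𝓝 a)) (ha : a ≠ 1) :
    Tendsto (fun n => 𝔼 i ∈ range (M n), u n i) l (𝓝 0) := by
  have hfactor : Tendsto (fun n => (c n - 1) * 𝔼 i ∈ range (M n), u n i) l (𝓝 0) := by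
    refine (tendsto_expect_range_add_sub hM hu P).congr fun n => ?_
    simp only [hshift, ← mul_expect]
    ring
  have hc1 : Tendsto (fun n => c n - 1) l (𝓝 (a - 1)) := hc.sub_const 1
  have hquot := hfactor.div hc1 (sub_ne_zero.2 ha)
  rw [zero_div] at hquot
  refine hquot.congr' ?_
  filter_upwards [hc1.eventually_ne (sub_ne_zero.2 ha)] with n hn
  exact mul_div_cancel_left₀ _ hn

lemma expect_range_add_eq_of_periodic {v : ℕ → 𝕜} {P : ℕ} (hv : Function.Periodic v P) (i : ℕ) :
    𝔼 h ∈ range P, v (i + h) = 𝔼 h ∈ range P, v h := by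
  induction i with
  | zero => simp
  | succ i ih =>
    rw [← ih, ← sub_eq_zero, ← expect_sub_distrib, expect_eq_sum_div_card]
    simp only [add_assoc, add_comm 1]
    rw [sum_range_sub (fun h => v (i + h)), add_zero, hv, sub_self, zero_div]

lemma tendsto_expect_range_of_periodic {v : ℕ → 𝕜} {P : ℕ} (hM : Tendsto M l atTop)
    (hv : Function.Periodic v P) (hP : 0 < P) :
    Tendsto (fun n => 𝔼 i ∈ range (M n), v i) l (𝓝 (𝔼 i ∈ range P, v i)) := by
  have hC (i : ℕ) : ‖v i‖ ≤ ∑ j ∈ range P, ‖v j‖ := by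
    rw [← hv.map_mod_nat i]
    exact single_le_sum (f := fun j => ‖v j‖) (fun _ _ => norm_nonneg _)
      (mem_range.2 (Nat.mod_lt i hP))
  have hsmooth := tendsto_expect_range_expect_add_sub (u := fun _ => v) hM (fun _ => hC)
    (nonempty_range_iff.2 hP.ne')
  have hneg := hsmooth.neg.add_const (𝔼 i ∈ range P, v i)
  rw [neg_zero, zero_add] at hneg
  refine hneg.congr' ?_
  filter_upwards [hM.eventually_gt_atTop 0] with n hn
  simp only [expect_range_add_eq_of_periodic hv]
  rw [expect_const (nonempty_range_iff.2 hn.ne')]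
  ring

lemma norm_expect_sq_le_expect_norm_sq {ι : Type*} (s : Finset ι) (v : ι → 𝕜) :
    ‖𝔼 i ∈ s, v i‖ ^ 2 ≤ 𝔼 i ∈ s, ‖v i‖ ^ 2 := by
  rcases s.eq_empty_or_nonempty with rfl | hs
  · simp
  calc ‖𝔼 i ∈ s, v i‖ ^ 2 ≤ (𝔼 i ∈ s, ‖v i‖ * 1) ^ 2 := by
        gcongr
        simpa using RCLike.norm_expect_le (K := 𝕜)
    _ ≤ (𝔼 i ∈ s, ‖v i‖ ^ 2) * 𝔼 _i ∈ s, (1 : ℝ) ^ 2 := expect_mul_sq_le_sq_mul_sq _ _ _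
    _ = 𝔼 i ∈ s, ‖v i‖ ^ 2 := by rw [expect_const hs, one_pow, mul_one]

/-- The correlation of the sequence `v` with itself at the lags `h` and `h'`, averaged over the
first `m` times. -/
noncomputable def correlation (v : ℕ → 𝕜) (m h h' : ℕ) : 𝕜 :=
  𝔼 i ∈ range m, v (i + h) * conj (v (i + h'))

lemma conj_correlation (v : ℕ → 𝕜) (m h h' : ℕ) :
    conj (correlation v m h h') = correlation v m h' h := by
  simp_rw [correlation, expect_eq_sum_div_card, map_div₀, map_sum, map_mul, RCLike.conj_conj,
    map_natCast, mul_comm]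

lemma norm_correlation_self_le {v : ℕ → 𝕜} (hv : ∀ i, ‖v i‖ ≤ C) (m h : ℕ) :
    ‖correlation v m h h‖ ≤ C ^ 2 := by
  refine norm_expect_range_le (fun i => ?_) m
  rw [norm_mul, RCLike.norm_conj, ← sq]
  gcongr
  exact hv _

lemma norm_expect_range_expect_add_sq_le (v : ℕ → 𝕜) (m : ℕ) (s : Finset ℕ) :
    ‖𝔼 i ∈ range m, 𝔼 h ∈ s, v (i + h)‖ ^ 2 ≤ 𝔼 h ∈ s, 𝔼 h' ∈ s, ‖correlation v m h h'‖ := by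
  have hexpand : ((𝔼 i ∈ range m, ‖𝔼 h ∈ s, v (i + h)‖ ^ 2 : ℝ) : 𝕜)
      = 𝔼 h ∈ s, 𝔼 h' ∈ s, correlation v m h h' := by
    have hconj (i : ℕ) : conj (𝔼 h ∈ s, v (i + h)) = 𝔼 h ∈ s, conj (v (i + h)) := by
      simp only [expect_eq_sum_div_card, map_div₀, map_sum, map_natCast]
    calc ((𝔼 i ∈ range m, ‖𝔼 h ∈ s, v (i + h)‖ ^ 2 : ℝ) : 𝕜)
        = 𝔼 i ∈ range m, (𝔼 h ∈ s, v (i + h)) * conj (𝔼 h ∈ s, v (i + h)) := by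
          simp only [RCLike.mul_conj, expect_eq_sum_div_card]
          push_cast
          rfl
      _ = 𝔼 i ∈ range m, 𝔼 h ∈ s, 𝔼 h' ∈ s, v (i + h) * conj (v (i + h')) := by
          simp only [hconj, expect_mul_expect]
      _ = 𝔼 h ∈ s, 𝔼 h' ∈ s, correlation v m h h' := by
          simp only [correlation, expect_comm (range m)]
  calc ‖𝔼 i ∈ range m, 𝔼 h ∈ s, v (i + h)‖ ^ 2
      ≤ 𝔼 i ∈ range m, ‖𝔼 h ∈ s, v (i + h)‖ ^ 2 := norm_expect_sq_le_expect_norm_sq _ _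
    _ = ‖𝔼 h ∈ s, 𝔼 h' ∈ s, correlation v m h h'‖ := by
        rw [← hexpand, RCLike.norm_ofReal, abs_of_nonneg (expect_nonneg fun _ _ => by positivity)]
    _ ≤ 𝔼 h ∈ s, 𝔼 h' ∈ s, ‖correlation v m h h'‖ :=
        (RCLike.norm_expect_le (K := 𝕜)).trans
          (expect_le_expect fun _ _ => RCLike.norm_expect_le (K := 𝕜))

lemma tendsto_correlation (hM : Tendsto M l atTop) (hu : ∀ n i, ‖u n i‖ ≤ C)
    (hcorr : ∀ h, 0 < h → Tendsto (fun n => correlation (u n) (M n) h 0) l (𝓝 0))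
    {h h' : ℕ} (hne : h ≠ h') :
    Tendsto (fun n => correlation (u n) (M n) h h') l (𝓝 0) := by
  wlog hlt : h' < h generalizing h h'
  · have hswap := (RCLike.continuous_conj (K := 𝕜)).continuousAt.tendsto.comp
      (this hne.symm (by omega))
    simpa [Function.comp_def, conj_correlation] using hswap
  obtain ⟨k, rfl⟩ := Nat.exists_eq_add_of_lt hlt
  have hprod (n : κ) (i : ℕ) : ‖u n (i + (k + 1)) * conj (u n i)‖ ≤ C * C := by
    rw [norm_mul, RCLike.norm_conj]
    exact mul_le_mul (hu _ _) (hu _ _) (norm_nonneg _) ((norm_nonneg _).trans (hu n 0))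
  have hlag := (tendsto_expect_range_add_sub hM hprod h').add (hcorr (k + 1) k.succ_pos)
  simp only [correlation, add_zero, sub_add_cancel] at hlag
  simpa only [correlation, add_assoc] using hlag

lemma expect_expect_ite_eq {ι F : Type*} [DecidableEq ι] [Semifield F] [CharZero F] (s : Finset ι)
    (a : F) :
    𝔼 i ∈ s, 𝔼 j ∈ s, (if i = j then a else 0) = a / #s := by
  rcases s.eq_empty_or_nonempty with rfl | hs
  · simp
  have hrow : ∀ i ∈ s, 𝔼 j ∈ s, (if i = j then a else 0) = a / #s := fun i hi => by
    rw [expect_eq_sum_div_card, sum_ite_eq, if_pos hi]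
  rw [expect_congr rfl hrow, expect_const hs]

/-- Van der Corput's lemma: the mean square of an average over `K` shifts is the mean of `K ^ 2`
correlations, of which only the `K` diagonal ones survive in the limit. -/
theorem tendsto_expect_range_of_tendsto_correlation (hM : Tendsto M l atTop)
    (hu : ∀ n i, ‖u n i‖ ≤ C)
    (hcorr : ∀ h, 0 < h → Tendsto (fun n => correlation (u n) (M n) h 0) l (𝓝 0)) :
    Tendsto (fun n => 𝔼 i ∈ range (M n), u n i) l (𝓝 0) := by
  rw [NormedAddGroup.tendsto_nhds_zero]
  intro ε hε
  obtain ⟨K, hK⟩ := exists_nat_gt (C ^ 2 / (ε / 2) ^ 2)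
  have hK0 : 0 < (K : ℝ) := (by positivity : 0 ≤ C ^ 2 / (ε / 2) ^ 2).trans_lt hK
  have hKne : (range K).Nonempty := nonempty_range_iff.2 (by exact_mod_cast hK0.ne')
  have hsum : Tendsto (fun n => 𝔼 h ∈ range K, 𝔼 h' ∈ range K,
      if h = h' then C ^ 2 else ‖correlation (u n) (M n) h h'‖) l (𝓝 (C ^ 2 / K)) := by
    have hlim := expect_expect_ite_eq (range K) (C ^ 2)
    rw [card_range] at hlim
    rw [← hlim]
    simp only [expect_eq_sum_div_card]
    refine (tendsto_finsetSum _ fun h _ =>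
      (tendsto_finsetSum _ fun h' _ => ?_).div_const _).div_const _
    split_ifs with hh
    · exact tendsto_const_nhds
    · simpa using (tendsto_correlation hM hu hcorr hh).norm
  have hlt : C ^ 2 / K < (ε / 2) ^ 2 := by
    rw [div_lt_iff₀ (by positivity)] at hK ⊢
    linarith
  have hsmooth := tendsto_expect_range_expect_add_sub hM hu hKne
  filter_upwards [hsum.eventually_lt_const hlt,
    NormedAddGroup.tendsto_nhds_zero.1 hsmooth (ε / 2) (half_pos hε)] with n hn hn'
  have hsq : ‖𝔼 i ∈ range (M n), 𝔼 h ∈ range K, u n (i + h)‖ ^ 2 < (ε / 2) ^ 2 := by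
    refine (norm_expect_range_expect_add_sq_le (u n) (M n) _).trans_lt (lt_of_le_of_lt ?_ hn)
    refine expect_le_expect fun h _ => expect_le_expect fun h' _ => ?_
    split_ifs with hh
    · exact hh ▸ norm_correlation_self_le (hu n) _ _
    · exact le_rfl
  have hhalf := lt_of_pow_lt_pow_left₀ 2 (by positivity) hsq
  rw [norm_sub_rev] at hn'
  have htri := norm_sub_norm_le (𝔼 i ∈ range (M n), u n i)
    (𝔼 i ∈ range (M n), 𝔼 h ∈ range K, u n (i + h))
  linarith

end Averages

section ForwardDifferences

open fwdDiff
open scoped Nat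

variable {A : Type*} [AddCommGroup A] {f : ℕ → A} {H : AddSubgroup A} {J N : ℕ}

lemma fwdDiff_add_one (f : ℕ → A) (h i : ℕ) :
    Δ_[h + 1] f i = Δ_[h] f i + Δ_[1] f (i + h) := by
  simp only [fwdDiff, add_assoc]
  abel

lemma fwdDiff_mem (hf : ∀ i, Δ_[1] f i ∈ H) (h i : ℕ) : Δ_[h] f i ∈ H := by
  induction h with
  | zero => simp [fwdDiff]
  | succ h ih => exact fwdDiff_add_one f h i ▸ add_mem ih (hf _)

lemma fwdDiff_sub_nsmul_mem (hf : ∀ i, Δ_[1] ^[2] f i ∈ H) (h i : ℕ) :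
    Δ_[h] f i - h • Δ_[1] f i ∈ H := by
  induction h with
  | zero => simp [fwdDiff]
  | succ h ih =>
    convert add_mem ih (fwdDiff_mem (f := Δ_[1] f) hf h i) using 1
    rw [fwdDiff_add_one, succ_nsmul, fwdDiff.eq_1 h (Δ_[1] f)]
    abel

lemma fwdDiff_iter_fwdDiff_comm (f : ℕ → A) (h m : ℕ) :
    Δ_[1] ^[m] (Δ_[h] f) = Δ_[h] (Δ_[1] ^[m] f) := by
  have hcomm : Function.Commute (Δ_[1] : (ℕ → A) → ℕ → A) Δ_[h] := fun f => by
    funext i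
    simp only [fwdDiff, add_right_comm i]
    abel
  exact hcomm.iterate_left m f

lemma fwdDiff_iter_fwdDiff_mem {m : ℕ} (hf : ∀ i, Δ_[1] ^[m + 1] f i ∈ H) (h i : ℕ) :
    Δ_[1] ^[m] (Δ_[h] f) i ∈ H := by
  rw [fwdDiff_iter_fwdDiff_comm]
  exact fwdDiff_mem (fun j => Function.iterate_succ_apply' Δ_[1] m f ▸ hf j) h i

lemma fwdDiff_iter_zero (h m : ℕ) : Δ_[h] ^[m] (0 : ℕ → A) = 0 :=
  Function.iterate_fixed (fwdDiff_const h (0 : A)) m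

lemma fwdDiff_iter_eq_zero_of_le {m : ℕ} (hf : Δ_[1] ^[J] f = 0) (hm : J ≤ m) :
    Δ_[1] ^[m] f = 0 := by
  rw [← Nat.sub_add_cancel hm, Function.iterate_add_apply, hf, fwdDiff_iter_zero]

lemma fwdDiff_mem_or_exists_fwdDiff_iter_notMem (hf : ∀ i, Δ_[1] ^[J] f i ∈ H) :
    (∀ i, Δ_[1] f i ∈ H) ∨
      ∃ D i, (∀ j, Δ_[1] ^[D + 2] f j ∈ H) ∧ Δ_[1] ^[D + 1] f i ∉ H := by
  induction J with
  | zero => exact Or.inl fun i => sub_mem (hf (i + 1)) (hf i)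
  | succ J ih =>
    by_cases hJ : ∀ i, Δ_[1] ^[J] f i ∈ H
    · exact ih hJ
    · obtain ⟨i, hi⟩ := not_forall.1 hJ
      cases J with
      | zero => exact Or.inl hf
      | succ D => exact Or.inr ⟨D, i, hf, hi⟩

lemma exists_nsmul_eq_zero_of_fwdDiff_iter_eq_zero (hJ : Δ_[1] ^[J] f = 0)
    (hf : ∀ i, f i ∈ AddCommGroup.torsion A) : ∃ N, 0 < N ∧ ∀ i, N • f i = 0 := by
  induction J generalizing f with
  | zero => exact ⟨1, one_pos, fun i => by simpa using congrFun hJ i⟩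
  | succ J ih =>
    obtain ⟨N, hN, hNf⟩ := ih (f := Δ_[1] f) hJ fun i => sub_mem (hf _) (hf _)
    obtain ⟨N₀, hN₀, hN₀f⟩ := isOfFinAddOrder_iff_nsmul_eq_zero.1 (hf 0)
    refine ⟨N₀ * N, Nat.mul_pos hN₀ hN, fun i => ?_⟩
    have hker : N • Δ_[i] f 0 = 0 :=
      fwdDiff_mem (H := (nsmulAddMonoidHom N : A →+ A).ker) (fun i => hNf i) i 0
    have hi : f i = f 0 + Δ_[i] f 0 := by simp [fwdDiff]
    rw [hi, smul_add, mul_nsmul (f 0), hN₀f, mul_nsmul', hker, smul_zero, smul_zero, add_zero]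

lemma dvd_choose_mul_factorial (N : ℕ) {m : ℕ} (hm : 0 < m) (hmJ : m ≤ J) :
    N ∣ (N * J !).choose m := by
  obtain ⟨t, ht⟩ := Nat.dvd_factorial hm hmJ
  obtain ⟨k, rfl⟩ := Nat.exists_eq_succ_of_ne_zero hm.ne'
  rcases Nat.eq_zero_or_eq_succ_pred (N * J !) with hn | hn
  · simp [hn]
  refine ⟨t * (N * J !).pred.choose k, Nat.eq_of_mul_eq_mul_right k.succ_pos ?_⟩
  calc (N * J !).choose (k + 1) * (k + 1)
      = (N * J !) * (N * J !).pred.choose k := by rw [hn, ← Nat.add_one_mul_choose_eq]; rfl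
    _ = N * (t * (N * J !).pred.choose k) * (k + 1) := by
        generalize (N * J !).pred.choose k = c
        rw [ht, Nat.succ_eq_add_one]
        ring

lemma fwdDiff_mul_factorial (hJ : Δ_[1] ^[J] f = 0) (hN : ∀ i, N • Δ_[1] ^[2] f i = 0) (i : ℕ) :
    Δ_[N * J !] f i = (N * J !) • Δ_[1] f i := by
  have hhigher (k : ℕ) : (N * J !).choose (k + 2) • Δ_[1] ^[k + 2] f i = 0 := by
    rcases le_or_gt (k + 2) J with hk | hk
    · obtain ⟨t, ht⟩ := dvd_choose_mul_factorial N (Nat.succ_pos (k + 1)) hk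
      have hNf : N • Δ_[1] ^[k + 2] f = 0 := by
        rw [Function.iterate_add_apply, ← fwdDiff_iter_const_smul, show N • Δ_[1] ^[2] f = 0 from
          funext hN, fwdDiff_iter_zero]
      rw [ht, mul_nsmul, ← Pi.smul_apply N, hNf, Pi.zero_apply, smul_zero]
    · rw [fwdDiff_iter_eq_zero_of_le hJ hk.le, Pi.zero_apply, smul_zero]
  rcases Nat.eq_zero_or_eq_succ_pred (N * J !) with hn | hn
  · simp [hn, fwdDiff]
  calc Δ_[N * J !] f i
      = f (i + (N * J !) • 1) - f i := by rw [fwdDiff, smul_eq_mul, mul_one]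
    _ = (∑ k ∈ Finset.range ((N * J !).pred + 2), (N * J !).choose k • Δ_[1] ^[k] f i) - f i := by
        rw [shift_eq_sum_fwdDiff_iter 1 f, show (N * J !).pred + 2 = N * J ! + 1 by omega]
    _ = (N * J !) • Δ_[1] f i := by
        rw [Finset.sum_range_succ', Finset.sum_range_succ', Finset.sum_eq_zero fun k _ => hhigher k]
        simp

lemma periodic_mul_factorial (hJ : Δ_[1] ^[J] f = 0) (hN : ∀ i, N • Δ_[1] f i = 0) :
    Function.Periodic f (N * J !) := fun i => by
  have hN2 (i : ℕ) : N • Δ_[1] ^[2] f i = 0 := by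
    change N • (Δ_[1] f (i + 1) - Δ_[1] f i) = 0
    rw [smul_sub, hN, hN, sub_zero]
  have hstep := fwdDiff_mul_factorial hJ hN2 i
  rwa [mul_nsmul, hN, smul_zero, fwdDiff, sub_eq_zero] at hstep

lemma exists_periodic_of_fwdDiff_mem_torsion (hJ : Δ_[1] ^[J] f = 0)
    (htors : ∀ i, Δ_[1] f i ∈ AddCommGroup.torsion A) :
    ∃ P, 0 < P ∧ Function.Periodic f P := by
  obtain ⟨N, hN, hNf⟩ := exists_nsmul_eq_zero_of_fwdDiff_iter_eq_zero (J := J) (f := Δ_[1] f)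
    (fwdDiff_iter_eq_zero_of_le (m := J + 1) hJ J.le_succ) htors
  exact ⟨N * J !, Nat.mul_pos hN J.factorial_pos, periodic_mul_factorial hJ hNf⟩

end ForwardDifferences

section Weyl

open fwdDiff AddCircle Finset
open scoped Nat

variable {κ : Type*} {l : Filter κ} {M : κ → ℕ} {p : ℕ → UnitAddCircle} {J : ℕ}
  {ψ : κ → UnitAddCircle →+ UnitAddCircle}

lemma norm_expect_range_toCircle_le (p : ℕ → UnitAddCircle) (m : ℕ) :
    ‖𝔼 i ∈ range m, (toCircle (p i) : ℂ)‖ ≤ 1 :=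
  norm_expect_range_le (fun _ => (Circle.norm_coe _).le) m

lemma toCircle_ne_one_of_notMem_torsion {a : UnitAddCircle}
    (ha : a ∉ AddCommGroup.torsion UnitAddCircle) : (toCircle a : ℂ) ≠ 1 := by
  rw [Ne, Circle.coe_eq_one, ← toCircle_zero, (injective_toCircle one_ne_zero).eq_iff]
  rintro rfl
  exact ha (zero_mem _)

lemma nsmul_notMem_torsion {A : Type*} [AddCommGroup A] {a : A} {n : ℕ} (hn : 0 < n)
    (ha : a ∉ AddCommGroup.torsion A) : n • a ∉ AddCommGroup.torsion A := fun h =>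
  ha (isOfFinAddOrder_nsmul.1 h |>.resolve_right hn.ne')

lemma exists_fwdDiff_eq_nsmul_of_fwdDiff_two_mem_torsion (hJ : Δ_[1] ^[J] p = 0)
    (htors : ∀ i, Δ_[1] ^[2] p i ∈ AddCommGroup.torsion UnitAddCircle) :
    ∃ P, 0 < P ∧ ∀ i j, Δ_[P] p i = P • Δ_[1] p j := by
  have hJ2 : Δ_[1] ^[J] (Δ_[1] ^[2] p) = 0 := by
    rw [← Function.iterate_add_apply]
    exact fwdDiff_iter_eq_zero_of_le hJ (Nat.le_add_right _ _)
  obtain ⟨N, hN, hNp⟩ := exists_nsmul_eq_zero_of_fwdDiff_iter_eq_zero hJ2 htors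
  have hconst (j : ℕ) : N • Δ_[1] p j = N • Δ_[1] p 0 := by
    have hker := fwdDiff_mem (f := Δ_[1] p)
      (H := (nsmulAddMonoidHom N : UnitAddCircle →+ UnitAddCircle).ker) hNp j 0
    simpa [fwdDiff, sub_eq_zero, smul_sub] using hker
  refine ⟨N * J !, Nat.mul_pos hN (Nat.factorial_pos _), fun i j => ?_⟩
  rw [fwdDiff_mul_factorial hJ hNp, mul_nsmul, mul_nsmul, hconst i, hconst j]

lemma tendsto_expect_toCircle_of_fwdDiff_two_mem_torsion (hJ : Δ_[1] ^[J] p = 0)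
    (htors : ∀ i, Δ_[1] ^[2] p i ∈ AddCommGroup.torsion UnitAddCircle) {i₀ : ℕ}
    (hi₀ : Δ_[1] p i₀ ∉ AddCommGroup.torsion UnitAddCircle)
    (hM : Tendsto M l atTop) (hψ : ∀ a, Tendsto (fun n => ψ n a) l (𝓝 a)) :
    Tendsto (fun n => 𝔼 i ∈ range (M n), (toCircle (ψ n (p i)) : ℂ)) l (𝓝 0) := by
  obtain ⟨P, hP, hstep⟩ := exists_fwdDiff_eq_nsmul_of_fwdDiff_two_mem_torsion hJ htors
  have hcont : Continuous fun a : UnitAddCircle => (toCircle a : ℂ) := by fun_prop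
  refine tendsto_expect_range_of_mul_shift (P := P) hM (fun n i => (Circle.norm_coe _).le)
    (fun n i => ?_) ((hcont.tendsto _).comp (hψ (P • Δ_[1] p i₀)))
    (toCircle_ne_one_of_notMem_torsion (nsmul_notMem_torsion hP hi₀))
  rw [Function.comp_apply, ← hstep i i₀, ← Circle.coe_mul, ← toCircle_add, ← map_add, fwdDiff,
    sub_add_cancel]

lemma correlation_toCircle_map (ψ : UnitAddCircle →+ UnitAddCircle) (p : ℕ → UnitAddCircle)
    (m h : ℕ) :
    correlation (fun i => (toCircle (ψ (p i)) : ℂ)) m h 0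
      = 𝔼 i ∈ range m, (toCircle (ψ (Δ_[h] p i)) : ℂ) := by
  refine expect_congr rfl fun i _ => ?_
  rw [fwdDiff, map_sub, sub_eq_add_neg, toCircle_add, toCircle_neg, Circle.coe_mul,
    Circle.coe_inv_eq_conj, add_zero]

/-- Weyl differencing: the correlations of `ψ n ∘ p` are averages along `ψ n ∘ Δ_[h] p`, so van der
Corput's lemma lowers the degree `D + 1` of `p` modulo torsion. -/
theorem tendsto_expect_toCircle_of_fwdDiff_iter_mem_torsion {D : ℕ} (hJ : Δ_[1] ^[J] p = 0)
    (htors : ∀ i, Δ_[1] ^[D + 2] p i ∈ AddCommGroup.torsion UnitAddCircle) {i₀ : ℕ}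
    (hi₀ : Δ_[1] ^[D + 1] p i₀ ∉ AddCommGroup.torsion UnitAddCircle)
    (hM : Tendsto M l atTop) (hψ : ∀ a, Tendsto (fun n => ψ n a) l (𝓝 a)) :
    Tendsto (fun n => 𝔼 i ∈ range (M n), (toCircle (ψ n (p i)) : ℂ)) l (𝓝 0) := by
  induction D generalizing p with
  | zero => exact tendsto_expect_toCircle_of_fwdDiff_two_mem_torsion hJ htors hi₀ hM hψ
  | succ D ih =>
    refine tendsto_expect_range_of_tendsto_correlation hM (fun n i => (Circle.norm_coe _).le)
      fun h hh => ?_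
    simp only [correlation_toCircle_map]
    refine ih (p := Δ_[h] p) ?_ (fwdDiff_iter_fwdDiff_mem htors h) fun hmem => ?_
    · rw [fwdDiff_iter_fwdDiff_comm, hJ]
      exact fwdDiff_const h 0
    · have hlinear := fwdDiff_sub_nsmul_mem (f := Δ_[1] ^[D + 1] p)
        (H := AddCommGroup.torsion UnitAddCircle)
        (fun i => by simpa only [← Function.iterate_add_apply, add_comm 2] using htors i) h i₀
      rw [fwdDiff_iter_fwdDiff_comm] at hmem
      refine nsmul_notMem_torsion hh hi₀ ?_
      rw [Function.iterate_succ_apply']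
      simpa using sub_mem hmem hlinear

theorem exists_tendsto_expect_toCircle (hJ : Δ_[1] ^[J] p = 0) :
    ∃ L, Tendsto (fun m => 𝔼 i ∈ range m, (toCircle (p i) : ℂ)) atTop (𝓝 L) := by
  rcases fwdDiff_mem_or_exists_fwdDiff_iter_notMem (f := p) (J := J)
    (H := AddCommGroup.torsion UnitAddCircle) (fun i => by simp [hJ]) with
    htors | ⟨D, i₀, htors, hi₀⟩
  · obtain ⟨P, hP, hperiodic⟩ := exists_periodic_of_fwdDiff_mem_torsion hJ htors
    exact ⟨_, tendsto_expect_range_of_periodic tendsto_id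
      (hperiodic.comp fun a => (toCircle a : ℂ)) hP⟩
  · exact ⟨0, tendsto_expect_toCircle_of_fwdDiff_iter_mem_torsion
      (ψ := fun _ => AddMonoidHom.id _) hJ htors hi₀ tendsto_id fun _ => tendsto_const_nhds⟩

lemma tendsto_expect_toCircle_map_sub_of_fwdDiff_mem_torsion
    (htors : ∀ i, Δ_[1] p i ∈ AddCommGroup.torsion UnitAddCircle)
    (hψ : ∀ a, Tendsto (fun n => ψ n a) l (𝓝 a))
    (hψtors : ∀ n, ∀ a ∈ AddCommGroup.torsion UnitAddCircle, ψ n a = a) :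
    Tendsto (fun n => 𝔼 i ∈ range (M n), (toCircle (ψ n (p i)) : ℂ)
      - 𝔼 i ∈ range (M n), (toCircle (p i) : ℂ)) l (𝓝 0) := by
  have hshift (n : κ) (i : ℕ) : ψ n (p i) = ψ n (p 0) - p 0 + p i := by
    have hfix : ψ n (p i - p 0) = p i - p 0 := by
      simpa [fwdDiff] using hψtors n _ (fwdDiff_mem htors i 0)
    rw [← sub_add_cancel (p i) (p 0), map_add, hfix]
    abel
  have hfactor : Tendsto (fun n => (toCircle (ψ n (p 0) - p 0) : ℂ) - 1) l (𝓝 0) := by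
    have hcont : Continuous fun a : UnitAddCircle => (toCircle (a - p 0) : ℂ) - 1 := by fun_prop
    simpa [Function.comp_def] using (hcont.tendsto (p 0)).comp (hψ (p 0))
  have hmul (n : κ) : 𝔼 i ∈ range (M n), (toCircle (ψ n (p i)) : ℂ)
      = toCircle (ψ n (p 0) - p 0) * 𝔼 i ∈ range (M n), (toCircle (p i) : ℂ) := by
    rw [mul_expect]
    exact expect_congr rfl fun i _ => by rw [hshift n i, toCircle_add, Circle.coe_mul]
  refine squeeze_zero_norm (fun n => ?_) (by simpa using hfactor.norm)
  rw [hmul, ← sub_one_mul, norm_mul]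
  exact mul_le_of_le_one_right (norm_nonneg _) (norm_expect_range_toCircle_le p _)

theorem tendsto_expect_toCircle_map_sub (hJ : Δ_[1] ^[J] p = 0) (hM : Tendsto M l atTop)
    (hψ : ∀ a, Tendsto (fun n => ψ n a) l (𝓝 a))
    (hψtors : ∀ n, ∀ a ∈ AddCommGroup.torsion UnitAddCircle, ψ n a = a) :
    Tendsto (fun n => 𝔼 i ∈ range (M n), (toCircle (ψ n (p i)) : ℂ)
      - 𝔼 i ∈ range (M n), (toCircle (p i) : ℂ)) l (𝓝 0) := by
  rcases fwdDiff_mem_or_exists_fwdDiff_iter_notMem (f := p) (J := J)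
    (H := AddCommGroup.torsion UnitAddCircle) (fun i => by simp [hJ]) with
    htors | ⟨D, i₀, htors, hi₀⟩
  · exact tendsto_expect_toCircle_map_sub_of_fwdDiff_mem_torsion htors hψ hψtors
  · simpa using (tendsto_expect_toCircle_of_fwdDiff_iter_mem_torsion hJ htors hi₀ hM hψ).sub
      (tendsto_expect_toCircle_of_fwdDiff_iter_mem_torsion (ψ := fun _ => AddMonoidHom.id _)
        hJ htors hi₀ hM fun _ => tendsto_const_nhds)

end Weyl

section RationalApproximation

lemma tendsto_round_natCast_mul_div (x : ℝ) :
    Tendsto (fun n : ℕ => (round (n * x) : ℝ) / n) atTop (𝓝 x) := by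
  rw [tendsto_iff_norm_sub_tendsto_zero]
  refine squeeze_zero' (.of_forall fun _ => norm_nonneg _) ?_
    (tendsto_const_div_atTop_nhds_zero_nat (1 / 2))
  filter_upwards [eventually_gt_atTop 0] with n hn
  have hn' : (0 : ℝ) < n := Nat.cast_pos.2 hn
  rw [Real.norm_eq_abs, div_sub' hn'.ne', abs_div, abs_of_pos hn', abs_sub_comm]
  gcongr
  exact abs_sub_round _

lemma exists_basis_real_mem_range_one :
    ∃ (ι : Type) (b : Module.Basis ι ℚ ℝ), (1 : ℝ) ∈ Set.range b := by
  have hindep : LinearIndepOn ℚ id {(1 : ℝ)} := LinearIndepOn.singleton one_ne_zero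
  refine ⟨_, Module.Basis.extend hindep, ⟨1, hindep.subset_extend _ rfl⟩, ?_⟩
  exact Module.Basis.extend_apply_self hindep _

lemma tendsto_linearMap_of_tendsto_basis {κ ι R E F : Type*} [Semiring R] [AddCommMonoid E]
    [Module R E] [AddCommMonoid F] [Module R F] [TopologicalSpace F] [ContinuousAdd F]
    [ContinuousConstSMul R F] {l : Filter κ} (b : Module.Basis ι R E) {ℓ : κ → E →ₗ[R] F}
    {f : E →ₗ[R] F} (hb : ∀ i, Tendsto (fun n => ℓ n (b i)) l (𝓝 (f (b i)))) (x : E) :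
    Tendsto (fun n => ℓ n x) l (𝓝 (f x)) := by
  induction b.mem_span x using Submodule.span_induction with
  | mem x hx =>
    obtain ⟨i, rfl⟩ := hx
    exact hb i
  | zero => simpa only [map_zero] using tendsto_const_nhds
  | add x y _ _ hx hy => simpa only [map_add] using hx.add hy
  | smul r x _ hx => simpa only [map_smul] using hx.const_smul r

lemma exists_natCast_mul_linearMap_eq_intCast_of_basis {κ ι E : Type*} [AddCommGroup E]
    [Module ℚ E] (b : Module.Basis ι ℚ E) {ℓ : κ → E →ₗ[ℚ] ℝ}
    (hb : ∀ i, ∃ D : ℕ, 0 < D ∧ ∀ n, ∃ z : ℤ, D * ℓ n (b i) = z) (x : E) :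
    ∃ D : ℕ, 0 < D ∧ ∀ n, ∃ z : ℤ, D * ℓ n x = z := by
  induction b.mem_span x using Submodule.span_induction with
  | mem x hx =>
    obtain ⟨i, rfl⟩ := hx
    exact hb i
  | zero => exact ⟨1, one_pos, fun n => ⟨0, by simp⟩⟩
  | add x y _ _ hx hy =>
    obtain ⟨D, hD, hx⟩ := hx
    obtain ⟨D', hD', hy⟩ := hy
    refine ⟨D * D', Nat.mul_pos hD hD', fun n => ?_⟩
    obtain ⟨z, hz⟩ := hx n
    obtain ⟨w, hw⟩ := hy n
    refine ⟨D' * z + D * w, ?_⟩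
    push_cast
    rw [map_add, ← hz, ← hw]
    ring
  | smul q x _ hx =>
    obtain ⟨D, hD, hx⟩ := hx
    refine ⟨D * q.den, Nat.mul_pos hD q.pos, fun n => ?_⟩
    obtain ⟨z, hz⟩ := hx n
    have hq : (q : ℝ) * q.den = q.num := by exact_mod_cast q.mul_den_eq_num
    refine ⟨q.num * z, ?_⟩
    rw [map_smul, Rat.smul_def]
    push_cast
    rw [← hz, ← hq]
    ring

lemma exists_linearMap_rat_real_tendsto :
    ∃ ℓ : ℕ → ℝ →ₗ[ℚ] ℝ, (∀ n, ℓ n 1 = 1) ∧ (∀ x, Tendsto (fun n => ℓ n x) atTop (𝓝 x)) ∧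
      ∀ x, ∃ D : ℕ, 0 < D ∧ ∀ n : ℕ, ∃ z : ℤ, D * (n * ℓ n x) = z := by
  classical
  obtain ⟨ι, b, i₀, hi₀⟩ := exists_basis_real_mem_range_one
  let ℓ (n : ℕ) : ℝ →ₗ[ℚ] ℝ := b.constr ℚ fun i => if i = i₀ then 1 else round (n * b i) / n
  have hℓ₀ (n : ℕ) : ℓ n (b i₀) = 1 := by simp [ℓ, b.constr_basis]
  have hℓ (n : ℕ) {i : ι} (hi : i ≠ i₀) : ℓ n (b i) = round (n * b i) / n := by
    simp [ℓ, b.constr_basis, hi]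
  refine ⟨ℓ, fun n => hi₀ ▸ hℓ₀ n,
    tendsto_linearMap_of_tendsto_basis b (f := LinearMap.id) fun i => ?_,
    exists_natCast_mul_linearMap_eq_intCast_of_basis b (ℓ := fun n : ℕ => (n : ℝ) • ℓ n)
      fun i => ⟨1, one_pos, fun n => ?_⟩⟩ <;>
    rcases eq_or_ne i i₀ with rfl | hi
  · simpa only [LinearMap.id_apply, hℓ₀, ← hi₀] using tendsto_const_nhds
  · simpa only [hℓ _ hi, LinearMap.id_apply] using tendsto_round_natCast_mul_div (b i)
  · exact ⟨n, by simp [hℓ₀]⟩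
  · have hround : (n : ℝ) * (round (n * b i) / n) = round (n * b i) :=
      mul_div_cancel_of_imp' fun hn => by simp [hn]
    exact ⟨round (n * b i), by simp [hℓ n hi, hround]⟩

lemma mem_torsion_unitAddCircle_iff {x : ℝ} :
    (x : UnitAddCircle) ∈ AddCommGroup.torsion UnitAddCircle ↔ ∃ q : ℚ, (q : ℝ) = x := by
  rw [AddCommGroup.mem_torsion, AddCircle.isOfFinAddOrder_iff_exists_rat_eq_div, div_one]

theorem exists_addMonoidHom_unitAddCircle_tendsto :
    ∃ ψ : ℕ → UnitAddCircle →+ UnitAddCircle,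
      (∀ n, ∀ a ∈ AddCommGroup.torsion UnitAddCircle, ψ n a = a) ∧
      (∀ a, Tendsto (fun n => ψ n a) atTop (𝓝 a)) ∧
      ∀ a, ∃ D : ℕ, 0 < D ∧ ∀ n : ℕ, (D * n) • ψ n a = 0 := by
  obtain ⟨ℓ, hone, hlim, hden⟩ := exists_linearMap_rat_real_tendsto
  have hker (n : ℕ) : AddSubgroup.zmultiples (1 : ℝ) ≤
      (AddSubgroup.zmultiples (1 : ℝ)).comap (ℓ n).toAddMonoidHom := by
    rw [AddSubgroup.zmultiples_le]
    exact AddSubgroup.mem_comap.2 (by simp [hone])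
  let ψ (n : ℕ) : UnitAddCircle →+ UnitAddCircle :=
    QuotientAddGroup.map _ _ (ℓ n).toAddMonoidHom (hker n)
  refine ⟨ψ, fun n a ha => ?_, fun a => ?_, fun a => ?_⟩ <;>
    obtain ⟨x, rfl⟩ := QuotientAddGroup.mk_surjective a
  · obtain ⟨q, rfl⟩ := mem_torsion_unitAddCircle_iff.1 ha
    have hq : ℓ n q = q := by simpa [hone, Rat.smul_def] using map_smul (ℓ n) q 1
    exact congrArg _ hq
  · exact ((AddCircle.continuous_mk' 1).tendsto x).comp (hlim x)
  · obtain ⟨D, hD, hx⟩ := hden x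
    refine ⟨D, hD, fun n => ?_⟩
    obtain ⟨z, hz⟩ := hx n
    refine (AddCircle.coe_eq_zero_iff 1).2 ⟨z, ?_⟩
    simpa [mul_assoc] using hz.symm

end RationalApproximation

section ErgodicAverages

variable {α E : Type*} [NormedAddCommGroup E] [NormedSpace ℝ E] {T : α → α} {f : α → E} {C : ℝ}

lemma norm_birkhoffAverage_le (hC : ∀ x, ‖f x‖ ≤ C) (n : ℕ) (x : α) :
    ‖birkhoffAverage ℝ T f n x‖ ≤ C := by
  rcases eq_or_ne n 0 with rfl | hn
  · simpa using (norm_nonneg _).trans (hC x)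
  have hsum : ‖birkhoffSum T f n x‖ ≤ n * C := by
    simpa [birkhoffSum] using norm_sum_le_of_le (Finset.range n) fun i _ => hC (T^[i] x)
  rw [birkhoffAverage, norm_smul, norm_inv, RCLike.norm_natCast]
  exact (inv_mul_le_iff₀ (Nat.cast_pos.2 hn.bot_lt)).2 hsum

variable [MeasurableSpace α] {μ : Measure α}

lemma integral_birkhoffAverage {n : ℕ} (hT : MeasurePreserving T μ μ) (hf : Integrable f μ)
    (hn : n ≠ 0) :
    ∫ x, birkhoffAverage ℝ T f n x ∂μ = ∫ x, f x ∂μ := by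
  have hshift (i : ℕ) : ∫ x, f (T^[i] x) ∂μ = ∫ x, f x ∂μ := by
    have hTi := hT.iterate i
    rw [← integral_map hTi.aemeasurable (by rw [hTi.map_eq]; exact hf.aestronglyMeasurable),
      hTi.map_eq]
  have hint (i : ℕ) : Integrable (fun x => f (T^[i] x)) μ :=
    (hT.iterate i).integrable_comp_of_integrable hf
  simp only [birkhoffAverage, birkhoffSum]
  rw [integral_smul, integral_finsetSum _ fun i _ => hint i]
  simp only [hshift, Finset.sum_const, Finset.card_range]
  rw [← Nat.cast_smul_eq_nsmul ℝ, inv_smul_smul₀ (Nat.cast_ne_zero.2 hn)]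

lemma aestronglyMeasurable_birkhoffAverage (hT : MeasurePreserving T μ μ)
    (hf : AEStronglyMeasurable f μ) (n : ℕ) :
    AEStronglyMeasurable (birkhoffAverage ℝ T f n) μ :=
  (Finset.aestronglyMeasurable_fun_sum (Finset.range n) fun i _ =>
    hf.comp_measurePreserving (hT.iterate i)).const_smul _

theorem ae_tendsto_birkhoffAverage_integral_of_ergodic [CompleteSpace E] [IsProbabilityMeasure μ]
    (hT : Ergodic T μ)
    (hf : AEStronglyMeasurable f μ) (hC : ∀ x, ‖f x‖ ≤ C)
    (hlim : ∀ᵐ x ∂μ, ∃ L, Tendsto (fun n => birkhoffAverage ℝ T f n x) atTop (𝓝 L)) :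
    ∀ᵐ x ∂μ, Tendsto (fun n => birkhoffAverage ℝ T f n x) atTop (𝓝 (∫ x, f x ∂μ)) := by
  have hmeas (n : ℕ) := aestronglyMeasurable_birkhoffAverage hT.toMeasurePreserving hf n
  obtain ⟨g, hg, hfg⟩ := exists_stronglyMeasurable_limit_of_tendsto_ae hmeas hlim
  have hinv : g ∘ T =ᵐ[μ] g := by
    filter_upwards [hfg, hT.quasiMeasurePreserving.ae hfg] with x hx hTx
    have hbdd : Bornology.IsBounded (Set.range f) :=
      isBounded_iff_forall_norm_le.2 ⟨C, Set.forall_mem_range.2 hC⟩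
    have hdiff := tendsto_birkhoffAverage_apply_sub_birkhoffAverage' (𝕜 := ℝ) hbdd T x
    exact tendsto_nhds_unique hTx (by simpa using hdiff.add hx)
  obtain ⟨a, ha⟩ := hT.ae_eq_const_of_ae_eq_comp_ae hg.aestronglyMeasurable hinv
  have hdom : Tendsto (fun n => ∫ x, birkhoffAverage ℝ T f n x ∂μ) atTop (𝓝 (∫ x, g x ∂μ)) :=
    tendsto_integral_of_dominated_convergence (fun _ => C) hmeas (integrable_const C)
      (fun n => ae_of_all _ fun x => norm_birkhoffAverage_le hC n x) hfg
  have hconst : Tendsto (fun n => ∫ x, birkhoffAverage ℝ T f n x ∂μ) atTop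
      (𝓝 (∫ x, f x ∂μ)) := by
    refine tendsto_const_nhds.congr' ?_
    filter_upwards [eventually_ne_atTop 0] with n hn
    exact (integral_birkhoffAverage hT.toMeasurePreserving
      (.of_bound hf C (ae_of_all _ hC)) hn).symm
  have hgf : ∫ x, g x ∂μ = ∫ x, f x ∂μ := tendsto_nhds_unique hdom hconst
  have hga : ∫ x, g x ∂μ = a := by simp [integral_congr_ae ha]
  filter_upwards [hfg, ha] with x hx hax
  rwa [← hgf, hga, ← hax.trans Function.const_apply]

end ErgodicAverages

section EmpiricalMeasures

/-- The empirical measure `m_{T,x,n} = (1/n) ∑_{i<n} δ_{Tⁱx}`; it is the zero measure when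
`n = 0`. -/
noncomputable def empiricalMeasure {α : Type*} [MeasurableSpace α] (T : α → α) (x : α) (n : ℕ) :
    Measure α :=
  (n : ENNReal)⁻¹ • ∑ i ∈ Finset.range n, Measure.dirac (T^[i] x)

lemma isProbabilityMeasure_empiricalMeasure {α : Type*} [MeasurableSpace α] (T : α → α) (x : α)
    {n : ℕ} (hn : n ≠ 0) : IsProbabilityMeasure (empiricalMeasure T x n) := by
  refine ⟨?_⟩
  simp [empiricalMeasure, ENNReal.inv_mul_cancel (Nat.cast_ne_zero.2 hn) (ENNReal.natCast_ne_top n)]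

lemma integral_empiricalMeasure {α E : Type*} [MeasurableSpace α] [MeasurableSingletonClass α]
    [NormedAddCommGroup E] [NormedSpace ℝ E] [CompleteSpace E] (T : α → α) (x : α) (n : ℕ)
    (f : α → E) :
    ∫ y, f y ∂empiricalMeasure T x n = birkhoffAverage ℝ T f n x := by
  rw [empiricalMeasure, integral_smul_measure,
    integral_finsetSum_measure fun i _ => integrable_dirac (by simp)]
  simp [birkhoffAverage, birkhoffSum]

variable {κ ι : Type*} [Fintype ι] {l : Filter κ} {μ : Measure (UnitAddTorus ι)}
  [IsProbabilityMeasure μ]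

lemma tendsto_integral_of_mem_mFourierSubalgebra {ν : κ → Measure (UnitAddTorus ι)}
    [∀ n, IsProbabilityMeasure (ν n)]
    (hν : ∀ k, Tendsto (fun n => ∫ x, UnitAddTorus.mFourier k x ∂ν n) l
      (𝓝 (∫ x, UnitAddTorus.mFourier k x ∂μ)))
    {f : C(UnitAddTorus ι, ℂ)} (hf : f ∈ UnitAddTorus.mFourierSubalgebra ι) :
    Tendsto (fun n => ∫ x, f x ∂ν n) l (𝓝 (∫ x, f x ∂μ)) := by
  have hint (P : Measure (UnitAddTorus ι)) [IsProbabilityMeasure P] (g : C(UnitAddTorus ι, ℂ)) :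
      Integrable g P := g.continuous.integrable_of_hasCompactSupport (.of_compactSpace _)
  have hspan : f ∈ Submodule.span ℂ (Set.range (UnitAddTorus.mFourier (d := ι))) := by
    rwa [← UnitAddTorus.mFourierSubalgebra_coe]
  clear hf
  induction hspan using Submodule.span_induction with
  | mem g hg =>
    obtain ⟨k, rfl⟩ := hg
    exact hν k
  | zero => simpa using tendsto_const_nhds
  | add g g' _ _ hg hg' =>
    simp only [ContinuousMap.add_apply, integral_add (hint _ g) (hint _ g')]
    exact hg.add hg'
  | smul a g _ hg =>
    simp only [ContinuousMap.smul_apply, integral_smul]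
    exact hg.const_smul a

theorem tendsto_probabilityMeasure_of_tendsto_integral_mFourier
    {ν : κ → ProbabilityMeasure (UnitAddTorus ι)} {ν₀ : ProbabilityMeasure (UnitAddTorus ι)}
    (hν : ∀ k, Tendsto (fun n => ∫ x, UnitAddTorus.mFourier k x ∂(ν n : Measure (UnitAddTorus ι)))
      l (𝓝 (∫ x, UnitAddTorus.mFourier k x ∂(ν₀ : Measure (UnitAddTorus ι))))) :
    Tendsto ν l (𝓝 ν₀) := by
  refine ProbabilityMeasure.tendsto_of_tight_of_separatesPoints ℂ .of_compactSpace
    (A := (UnitAddTorus.mFourierSubalgebra ι).comap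
      (BoundedContinuousFunction.toContinuousMapStarₐ ℂ)) ?_
    fun g hg => tendsto_integral_of_mem_mFourierSubalgebra hν hg
  intro x y hxy
  obtain ⟨_, ⟨f, hf, rfl⟩, hfxy⟩ := UnitAddTorus.mFourierSubalgebra_separatesPoints hxy
  exact ⟨f, ⟨f, ⟨BoundedContinuousFunction.mkOfCompact f, hf, rfl⟩, rfl⟩, hfxy⟩

theorem tendsto_birkhoffAverage_of_tendsto_mFourier {T : UnitAddTorus ι → UnitAddTorus ι}
    {M : κ → ℕ} {x : κ → UnitAddTorus ι} (hM : Tendsto M l atTop)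
    (hx : ∀ k, Tendsto (fun n => birkhoffAverage ℝ T (UnitAddTorus.mFourier k) (M n) (x n)) l
      (𝓝 (∫ z, UnitAddTorus.mFourier k z ∂μ))) (f : C(UnitAddTorus ι, ℝ)) :
    Tendsto (fun n => birkhoffAverage ℝ T f (M n) (x n)) l (𝓝 (∫ z, f z ∂μ)) := by
  obtain rfl | _ := l.eq_or_neBot
  · exact tendsto_bot
  have hprob : ∀ᶠ n in l, ∃ ν : ProbabilityMeasure (UnitAddTorus ι),
      (ν : Measure _) = empiricalMeasure T (x n) (M n) := by
    filter_upwards [hM.eventually_ne_atTop 0] with n hn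
    exact ⟨⟨_, isProbabilityMeasure_empiricalMeasure T (x n) hn⟩, rfl⟩
  have : Nonempty (ProbabilityMeasure (UnitAddTorus ι)) := ⟨⟨μ, inferInstance⟩⟩
  obtain ⟨ν, hν⟩ := hprob.choice
  have hlim : Tendsto ν l (𝓝 ⟨μ, inferInstance⟩) := by
    refine tendsto_probabilityMeasure_of_tendsto_integral_mFourier fun k => (hx k).congr' ?_
    filter_upwards [hν] with n hn
    rw [hn, integral_empiricalMeasure]
  refine (ProbabilityMeasure.tendsto_iff_forall_integral_tendsto.1 hlim
    (BoundedContinuousFunction.mkOfCompact f)).congr' ?_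
  filter_upwards [hν] with n hn
  rw [hn, integral_empiricalMeasure]
  rfl

end EmpiricalMeasures

section ToralAutomorphisms

open fwdDiff AddCircle Finset Matrix
open scoped Nat

lemma mFourier_eq_toCircle {ι : Type*} [Fintype ι] (k : ι → ℤ) (x : UnitAddTorus ι) :
    UnitAddTorus.mFourier k x = toCircle (Fintype.linearCombination ℤ x k) := by
  have hprod (s : Finset ι) :
      ∏ i ∈ s, (toCircle (k i • x i) : ℂ) = toCircle (∑ i ∈ s, k i • x i) := by
    classical
    induction s using Finset.induction_on with
    | empty => simp
    | insert a s ha ih => rw [prod_insert ha, sum_insert ha, toCircle_add, ih, Circle.coe_mul]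
  exact hprod univ

variable {d : ℕ} {U : Matrix (Fin d) (Fin d) ℤ}

lemma linearCombination_toralAuto (U : Matrix (Fin d) (Fin d) ℤ) (x : Torus d) (k : Fin d → ℤ) :
    Fintype.linearCombination ℤ (toralAuto U x) k
      = Fintype.linearCombination ℤ x (k ᵥ* U) := by
  simp only [Fintype.linearCombination_apply, toralAuto, vecMul, dotProduct, smul_sum, sum_smul,
    mul_smul]
  exact sum_comm

lemma toralAuto_map (U : Matrix (Fin d) (Fin d) ℤ) (ψ : UnitAddCircle →+ UnitAddCircle)
    (x : Torus d) : toralAuto U (ψ ∘ x) = ψ ∘ toralAuto U x := by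
  funext i
  simp [toralAuto]

/-- The argument in `ℝ/ℤ` of the character `UnitAddTorus.mFourier k` at the `i`-th point of the
orbit of `x`. -/
noncomputable def orbitPhase (U : Matrix (Fin d) (Fin d) ℤ) (x : Torus d) (k : Fin d → ℤ) (i : ℕ) :
    UnitAddCircle :=
  Fintype.linearCombination ℤ ((toralAuto U)^[i] x) k

lemma birkhoffAverage_mFourier (U : Matrix (Fin d) (Fin d) ℤ) (x : Torus d) (k : Fin d → ℤ)
    (n : ℕ) :
    birkhoffAverage ℝ (toralAuto U) (UnitAddTorus.mFourier k) n x
      = 𝔼 i ∈ range n, (toCircle (orbitPhase U x k i) : ℂ) := by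
  rw [birkhoffAverage_congr_ring ℝ ℂ, birkhoffAverage, birkhoffSum, expect_eq_sum_div_card,
    card_range, smul_eq_mul, div_eq_inv_mul]
  simp only [mFourier_eq_toCircle, orbitPhase]

lemma orbitPhase_map (U : Matrix (Fin d) (Fin d) ℤ) (ψ : UnitAddCircle →+ UnitAddCircle)
    (x : Torus d) (k : Fin d → ℤ) (i : ℕ) :
    orbitPhase U (ψ ∘ x) k i = ψ (orbitPhase U x k i) := by
  have hiter : (toralAuto U)^[i] (ψ ∘ x) = ψ ∘ (toralAuto U)^[i] x :=
    (Function.Semiconj.iterate_right (f := fun x : Torus d => (ψ ∘ x : Torus d))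
      (fun x => (toralAuto_map U ψ x).symm) i x).symm
  simp [orbitPhase, hiter, Fintype.linearCombination_apply]

lemma orbitPhase_single (U : Matrix (Fin d) (Fin d) ℤ) (x : Torus d) (j : Fin d) (i : ℕ) :
    orbitPhase U x (Pi.single j 1) i = (toralAuto U)^[i] x j := by
  simp [orbitPhase]

lemma fwdDiff_iter_orbitPhase (U : Matrix (Fin d) (Fin d) ℤ) (x : Torus d) (k : Fin d → ℤ)
    (m : ℕ) : Δ_[1] ^[m] (orbitPhase U x k) = orbitPhase U x (k ᵥ* (U - 1) ^ m) := by
  induction m generalizing k with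
  | zero => simp
  | succ m ih =>
    have hstep : Δ_[1] (orbitPhase U x k) = orbitPhase U x (k ᵥ* (U - 1)) := by
      funext i
      rw [fwdDiff, orbitPhase, orbitPhase, orbitPhase, Function.iterate_succ_apply',
        linearCombination_toralAuto, vecMul_sub, vecMul_one, map_sub]
    rw [Function.iterate_succ_apply, hstep, ih, vecMul_vecMul, ← pow_succ']

lemma fwdDiff_iter_orbitPhase_eq_zero {m : ℕ} (hU : (U - 1) ^ m = 0) (x : Torus d)
    (k : Fin d → ℤ) : Δ_[1] ^[m] (orbitPhase U x k) = 0 := by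
  rw [fwdDiff_iter_orbitPhase, hU, vecMul_zero]
  funext i
  simp [orbitPhase]

lemma iterate_toralAuto_eq_self_of_nsmul_eq_zero {m N : ℕ} (hU : (U - 1) ^ m = 0) {x : Torus d}
    (hx : N • x = 0) : (toralAuto U)^[N * m !] x = x := by
  funext j
  set p := orbitPhase U x (Pi.single j 1)
  have hN (i : ℕ) : N • p i = 0 := by
    have hx0 : nsmulAddMonoidHom N ∘ x = (0 : UnitAddCircle →+ UnitAddCircle) ∘ x := hx
    rw [← nsmulAddMonoidHom_apply, ← orbitPhase_map, hx0, orbitPhase_map, AddMonoidHom.zero_apply]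
  have hperiodic := periodic_mul_factorial (fwdDiff_iter_orbitPhase_eq_zero hU x _)
    (fun i => show N • (p (i + 1) - p i) = 0 by rw [smul_sub, hN, hN, sub_zero]) 0
  rwa [zero_add, orbitPhase_single, orbitPhase_single] at hperiodic

theorem ae_tendsto_birkhoffAverage_mFourier {m : ℕ} (hU : (U - 1) ^ m = 0) {μ : Measure (Torus d)}
    [IsProbabilityMeasure μ] (hμ : Ergodic (toralAuto U) μ) (k : Fin d → ℤ) :
    ∀ᵐ x ∂μ, Tendsto (fun n => birkhoffAverage ℝ (toralAuto U) (UnitAddTorus.mFourier k) n x)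
      atTop (𝓝 (∫ z, UnitAddTorus.mFourier k z ∂μ)) := by
  refine ae_tendsto_birkhoffAverage_integral_of_ergodic hμ (C := 1)
    (UnitAddTorus.mFourier k).continuous.aestronglyMeasurable (fun x => ?_)
    (ae_of_all _ fun x => ?_)
  · rw [mFourier_eq_toCircle, Circle.norm_coe]
  · simp only [birkhoffAverage_mFourier]
    exact exists_tendsto_expect_toCircle (fwdDiff_iter_orbitPhase_eq_zero hU x k)

theorem exists_periodic_tendsto_birkhoffAverage_mFourier_sub {m : ℕ} (hU : (U - 1) ^ m = 0)
    (x : Torus d) :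
    ∃ c : ℕ, 0 < c ∧ ∃ y : ℕ → Torus d, (∀ n, (toralAuto U)^[c * n] (y n) = y n) ∧
      ∀ k, Tendsto (fun n =>
        birkhoffAverage ℝ (toralAuto U) (UnitAddTorus.mFourier k) (c * n) (y n)
          - birkhoffAverage ℝ (toralAuto U) (UnitAddTorus.mFourier k) (c * n) x) atTop (𝓝 0) := by
  obtain ⟨ψ, htors, hlim, hden⟩ := exists_addMonoidHom_unitAddCircle_tendsto
  choose D hD hψ using fun j => hden (x j)
  have hc : 0 < (∏ j, D j) * m ! := Nat.mul_pos (prod_pos fun j _ => hD j) m.factorial_pos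
  refine ⟨(∏ j, D j) * m !, hc, fun n => ψ n ∘ x, fun n => ?_, fun k => ?_⟩
  · rw [mul_right_comm]
    refine iterate_toralAuto_eq_self_of_nsmul_eq_zero hU (funext fun j => ?_)
    obtain ⟨t, ht⟩ := dvd_prod_of_mem D (mem_univ j)
    change ((∏ j, D j) * n) • ψ n (x j) = 0
    rw [ht, mul_right_comm, mul_nsmul, hψ, smul_zero]
  · simp only [birkhoffAverage_mFourier, orbitPhase_map]
    exact tendsto_expect_toCircle_map_sub (fwdDiff_iter_orbitPhase_eq_zero hU x k)
      (tendsto_id.const_mul_atTop' hc) hlim htors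

end ToralAutomorphisms

/-- For an ergodic invariant measure `μ` of a unipotent toral automorphism there exist
`c ∈ ℕ` and points `xₙ` of period `c·n` whose empirical measures
`m_{U,xₙ,cn} = (1/(cn)) ∑_{i<cn} δ_{Uⁱxₙ}` converge to `μ` in the weak-* topology
(tested against continuous functions). -/
theorem ergodic_measure_approx_by_periodic_unipotent
    {d : ℕ} (hd : 0 < d) (U : Matrix (Fin d) (Fin d) ℤ)
    (hUdet : IsUnit U.det) (hUuni : (U - 1) ^ d = 0)
    (μ : Measure (Torus d)) (hμp : IsProbabilityMeasure μ)
    (herg : Ergodic (toralAuto U) μ) :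
    ∃ c : ℕ, 0 < c ∧ ∃ xs : ℕ → Torus d,
      (∀ n : ℕ, 0 < n → (toralAuto U)^[c * n] (xs n) = xs n) ∧
      ∀ f : C(Torus d, ℝ),
        Tendsto (fun n : ℕ =>
            ((c * n : ℕ) : ℝ)⁻¹ * ∑ i ∈ Finset.range (c * n), f ((toralAuto U)^[i] (xs n)))
          atTop (nhds (∫ z, f z ∂μ)) := by
  obtain ⟨x, hx⟩ :=
    (ae_all_iff.2 fun k => ae_tendsto_birkhoffAverage_mFourier hUuni herg k).exists
  obtain ⟨c, hc, xs, hperiodic, hxs⟩ :=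
    exists_periodic_tendsto_birkhoffAverage_mFourier_sub hUuni x
  have hcn : Tendsto (fun n => c * n) atTop atTop := tendsto_id.const_mul_atTop' hc
  refine ⟨c, hc, xs, fun n _ => hperiodic n, tendsto_birkhoffAverage_of_tendsto_mFourier hcn ?_⟩
  intro k
  simpa using (hxs k).add ((hx k).comp hcn)
end

section
/- Let (X,T) be a dynamical system and let k ∈ ℕ. If the system (X, T^k) has dense periodic measures, then (X,T) has dense periodic measures. -/
open MeasureTheory Topology

/-- A dynamical system `(X,T)` has *dense periodic measures* if the finitely supported
`T`-invariant Borel probability measures are dense (in the weak-* topology) in the space of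
all `T`-invariant Borel probability measures. -/
def DensePeriodicMeasures {X : Type*} [TopologicalSpace X] [MeasurableSpace X]
    [OpensMeasurableSpace X] (T : X → X) : Prop :=
  ∀ μ : ProbabilityMeasure X, μ.toMeasure.map T = μ.toMeasure →
    μ ∈ closure {ν : ProbabilityMeasure X |
      ν.toMeasure.map T = ν.toMeasure ∧ ∃ s : Finset X, ν.toMeasure ↑s = 1}

/-!
If `μ` is `T`-invariant, then it is `T^k`-invariant, hence a limit of finitely supported
`T^k`-invariant measures. The averages `k⁻¹ ∑_{i<k} (T^i)_* ν` of such measures are finitely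
supported and `T`-invariant, since `T` permutes the summands cyclically. As averaging is weak-*
continuous and fixes `μ`, they converge to `μ`.
-/

open scoped NNReal

theorem inv_natCast_smul_sum_range_const {R M : Type*} [DivisionSemiring R] [CharZero R]
    [AddCommMonoid M] [Module R M] (k : ℕ) [NeZero k] (x : M) :
    (k : R)⁻¹ • ∑ _i ∈ Finset.range k, x = x := by
  rw [Finset.sum_const, Finset.card_range, ← Nat.cast_smul_eq_nsmul R,
    inv_smul_smul₀ (NeZero.ne (k : R))]

section OrbitAverage

variable {X : Type*} [MeasurableSpace X] {T : X → X} {k : ℕ} {μ : Measure X}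

/-- The average `k⁻¹ ∑_{i<k} (T^i)_* μ` of the first `k` pushforwards of a measure along `T`.
For `k = 0` it is the zero measure. -/
noncomputable def orbitAverage (T : X → X) (k : ℕ) (μ : Measure X) : Measure X :=
  (k : ℝ≥0)⁻¹ • ∑ i ∈ Finset.range k, μ.map T^[i]

theorem orbitAverage_apply (T : X → X) (k : ℕ) (μ : Measure X) (s : Set X) :
    orbitAverage T k μ s = (k : ℝ≥0)⁻¹ • ∑ i ∈ Finset.range k, μ.map T^[i] s := by
  rw [orbitAverage, Measure.smul_apply, Measure.finsetSum_apply]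

theorem orbitAverage_eq_self [NeZero k] (hμ : MeasurePreserving T μ μ) :
    orbitAverage T k μ = μ := by
  simp only [orbitAverage, (hμ.iterate _).map_eq, inv_natCast_smul_sum_range_const]

theorem isProbabilityMeasure_orbitAverage [NeZero k] [IsProbabilityMeasure μ]
    (hT : Measurable T) : IsProbabilityMeasure (orbitAverage T k μ) where
  measure_univ := by
    have map_univ (i : ℕ) : μ.map T^[i] Set.univ = 1 := by
      rw [Measure.map_apply (hT.iterate i) .univ, Set.preimage_univ, measure_univ]
    simp only [orbitAverage_apply, map_univ, inv_natCast_smul_sum_range_const]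

theorem measurePreserving_orbitAverage (hT : Measurable T) (hμ : μ.map T^[k] = μ) :
    MeasurePreserving T (orbitAverage T k μ) (orbitAverage T k μ) where
  measurable := hT
  map_eq := by
    have map_map_iterate (i : ℕ) : (μ.map T^[i]).map T = μ.map T^[i + 1] := by
      rw [Measure.map_map hT (hT.iterate i), Function.iterate_succ']
    have sum_shift : ∑ i ∈ Finset.range k, μ.map T^[i + 1] = ∑ i ∈ Finset.range k, μ.map T^[i] := by
      cases k with
      | zero => rfl
      | succ m =>
        rw [Finset.sum_range_succ, hμ, Finset.sum_range_succ', Function.iterate_zero,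
          Measure.map_id]
    simp only [orbitAverage, Measure.map_smul, Measure.map_finset_sum hT.aemeasurable,
      map_map_iterate, sum_shift]

theorem measure_le_orbitAverage_iUnion_image [NeZero k] (hT : Measurable T) (s : Set X) :
    μ s ≤ orbitAverage T k μ (⋃ i ∈ Finset.range k, T^[i] '' s) := by
  set U := ⋃ i ∈ Finset.range k, T^[i] '' s
  have le_map (i : ℕ) (hi : i ∈ Finset.range k) : μ s ≤ μ.map T^[i] U :=
    (Measure.le_map_apply_image (hT.iterate i).aemeasurable s).trans
      (measure_mono (Set.subset_iUnion₂ (s := fun j _ => T^[j] '' s) i hi))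
  calc
    μ s = (k : ℝ≥0)⁻¹ • ∑ _i ∈ Finset.range k, μ s :=
      (inv_natCast_smul_sum_range_const k _).symm
    _ ≤ (k : ℝ≥0)⁻¹ • ∑ i ∈ Finset.range k, μ.map T^[i] U :=
      smul_le_smul_of_nonneg_left (Finset.sum_le_sum le_map) zero_le
    _ = orbitAverage T k μ U := (orbitAverage_apply ..).symm

theorem exists_finset_orbitAverage_eq_one [NeZero k] [IsProbabilityMeasure μ]
    (hT : Measurable T) {s : Finset X} (hs : μ s = 1) :
    ∃ t : Finset X, orbitAverage T k μ t = 1 := by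
  classical
  have := isProbabilityMeasure_orbitAverage (k := k) (μ := μ) hT
  refine ⟨(Finset.range k).biUnion fun i => s.image T^[i], prob_le_one.antisymm ?_⟩
  simpa only [hs, Finset.coe_biUnion, Finset.coe_image, Finset.mem_coe] using
    measure_le_orbitAverage_iUnion_image (μ := μ) (k := k) hT s

/-- `orbitAverage` as an operator on probability measures, where the weak-* topology lives. -/
noncomputable def probOrbitAverage (hT : Measurable T) (k : ℕ) [NeZero k]
    (μ : ProbabilityMeasure X) : ProbabilityMeasure X :=
  ⟨orbitAverage T k μ, isProbabilityMeasure_orbitAverage hT⟩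

theorem toFiniteMeasure_probOrbitAverage (hT : Measurable T) (k : ℕ) [NeZero k]
    (μ : ProbabilityMeasure X) :
    (probOrbitAverage hT k μ).toFiniteMeasure =
      (k : ℝ≥0)⁻¹ • ∑ i ∈ Finset.range k, μ.toFiniteMeasure.map T^[i] := by
  apply FiniteMeasure.toMeasure_injective
  simp only [FiniteMeasure.toMeasure_smul, FiniteMeasure.toMeasure_sum,
    FiniteMeasure.toMeasure_map]
  rfl

theorem continuous_probOrbitAverage [TopologicalSpace X] [BorelSpace X] (hT : Continuous T)
    (k : ℕ) [NeZero k] : Continuous (probOrbitAverage hT.measurable k) := by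
  rw [(ProbabilityMeasure.toFiniteMeasure_isEmbedding X).continuous_iff]
  simp only [Function.comp_def, toFiniteMeasure_probOrbitAverage]
  refine .const_smul (continuous_finsetSum _ fun i _ => ?_) (k : ℝ≥0)⁻¹
  exact (FiniteMeasure.continuous_map (hT.iterate i)).comp
    ProbabilityMeasure.toFiniteMeasure_continuous

end OrbitAverage

theorem densePeriodicMeasures_of_iterate_general {X : Type*} [TopologicalSpace X]
    [MeasurableSpace X] [BorelSpace X] {T : X → X} (hT : Continuous T) (k : ℕ) [NeZero k]
    (h : DensePeriodicMeasures T^[k]) : DensePeriodicMeasures T := by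
  intro μ hμ
  have hpres : MeasurePreserving T μ.toMeasure μ.toMeasure := ⟨hT.measurable, hμ⟩
  have average_eq : probOrbitAverage hT.measurable k μ = μ :=
    Subtype.ext (orbitAverage_eq_self hpres)
  rw [← average_eq]
  refine map_mem_closure (continuous_probOrbitAverage hT k) (h μ (hpres.iterate k).map_eq) ?_
  rintro ν ⟨hν, s, hs⟩
  exact ⟨(measurePreserving_orbitAverage hT.measurable hν).map_eq,
    exists_finset_orbitAverage_eq_one hT.measurable hs⟩

/-- If `(X, T^k)` has dense periodic measures then so does `(X,T)`. -/
theorem densePeriodicMeasures_of_iterate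
    {X : Type*} [TopologicalSpace X] [CompactSpace X] [TopologicalSpace.MetrizableSpace X]
    [MeasurableSpace X] [BorelSpace X]
    (T : X ≃ₜ X) (k : ℕ) (hk : 0 < k)
    (h : DensePeriodicMeasures ((⇑T)^[k])) :
    DensePeriodicMeasures ⇑T := by
  have : NeZero k := ⟨hk.ne'⟩
  exact densePeriodicMeasures_of_iterate_general T.continuous k h
end
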